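/- If f is a smooth compactly supported function on ℝ², then ‖f‖²_{L²(ℝ²)} = (4π)^{-1} ∫_{-∞}^{∞} ∫_{S¹} |(Rf)~(σ,v)|² |σ| dv dσ, where (Rf)~ denotes the one-dimensional Fourier transform of Rf in the first variable. In particular ‖f‖_{L²(ℝ²)} ≤ (4π)^{-1/2} ‖Rf‖_{H^{1/2}_T(ℝ×S¹)}, where ‖h‖_{H^{1/2}_T} = ‖(1+σ²)^{1/4} h̃(σ,v)‖_{L²(ℝ×S¹)}. -/

import Mathlib

open MeasureTheory Real

/-- The Radon transform of `f : ℝ² → ℂ`: `Rf(s,v) = ∫ f(sv + t v^⊥) dt`. -/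
noncomputable def radonTransform (f : ℝ × ℝ → ℂ) (s : ℝ) (v : ℝ × ℝ) : ℂ :=
  ∫ t : ℝ, f (s * v.1 - t * v.2, s * v.2 + t * v.1)

/-- The one-dimensional Fourier transform `h̃(σ) = (2π)^{-1/2} ∫ h(s) e^{-isσ} ds`. -/
noncomputable def fourier1D (h : ℝ → ℂ) (σ : ℝ) : ℂ :=
  (((2 * π : ℝ) ^ ((1 : ℝ) / 2) : ℝ) : ℂ)⁻¹ * ∫ s : ℝ, h s * Complex.exp (-Complex.I * ((s * σ : ℝ) : ℂ))

/-!
With unitary normalizations, slicing `f̂` along the line of direction `v` gives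
`(Rf)~(σ, v) = (2π)^{1/2} f̂(σv)`. Every nonzero `ξ ∈ ℝ²` is of the form `σv` for exactly two pairs
`(σ, v)`, so integrating `|f̂(σv)|² |σ|` over `ℝ × S¹` gives `2‖f̂‖² = 2‖f‖²`. The stability estimate
follows from `|σ| ≤ (1 + σ²)^{1/2}`.
-/

open Complex (equivRealProd equivRealProdCLM)
open scoped FourierTransform SchwartzMap

section PolarCoordinates

variable {E : Type*} [NormedAddCommGroup E] [NormedSpace ℝ E]

lemma complexPolarCoord_symm_eq_circleMap (r θ : ℝ) :
    Complex.polarCoord.symm (r, θ) = circleMap 0 r θ := by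
  simp [circleMap_zero, Complex.exp_mul_I]

lemma integrableOn_smul_comp_complexPolarCoord_symm {g : ℂ → E} (hg : Integrable g) :
    IntegrableOn (fun p : ℝ × ℝ ↦ p.1 • g (Complex.polarCoord.symm p)) polarCoord.target := by
  have h_plane : Integrable (g ∘ Complex.measurableEquivRealProd.symm) :=
    Complex.volume_preserving_equiv_real_prod.symm.integrable_comp_of_integrable hg
  have h_abs : IntegrableOn (fun p : ℝ × ℝ ↦ |p.1| • g (Complex.polarCoord.symm p))
      polarCoord.target := by
    have h := (integrableOn_image_iff_integrableOn_abs_det_fderiv_smul volume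
      polarCoord.open_target.measurableSet
      (fun p _ ↦ (hasFDerivAt_polarCoord_symm p).hasFDerivWithinAt) polarCoord.symm.injOn
      (g ∘ Complex.measurableEquivRealProd.symm)).mp h_plane.integrableOn
    simpa only [det_fderivPolarCoordSymm] using! h
  exact h_abs.congr_fun (fun p hp ↦ by simp only [abs_of_pos (show 0 < p.1 from hp.1)])
    polarCoord.open_target.measurableSet

lemma intervalIntegral_circleMap_eq_smul_circleAverage (g : ℂ → E) (c : ℂ) (R : ℝ) :
    ∫ θ in (0 : ℝ)..2 * π, g (circleMap c R θ) = (2 * π) • circleAverage g c R := by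
  rw [circleAverage_def, smul_inv_smul₀ two_pi_pos.ne']

lemma setIntegral_Ioo_circleMap_eq_smul_circleAverage (g : ℂ → E) (c : ℂ) (R : ℝ) :
    ∫ θ in Set.Ioo (-π) π, g (circleMap c R θ) = (2 * π) • circleAverage g c R := by
  have h_shift := ((periodic_circleMap c R).comp g).intervalIntegral_add_eq 0 (-π)
  rw [zero_add, show -π + 2 * π = π by ring] at h_shift
  rw [← integral_Ioc_eq_integral_Ioo, ← intervalIntegral.integral_of_le (by linarith [pi_pos]),
    ← intervalIntegral_circleMap_eq_smul_circleAverage]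
  exact h_shift.symm

lemma integral_eq_smul_integral_Ioi_smul_circleAverage {g : ℂ → E} (hg : Integrable g) :
    ∫ w, g w = (2 * π) • ∫ r in Set.Ioi (0 : ℝ), r • circleAverage g 0 r := by
  have h_int := integrableOn_smul_comp_complexPolarCoord_symm hg
  rw [← Complex.integral_comp_polarCoord_symm g, ← integral_smul]
  rw [polarCoord_target, Measure.volume_eq_prod] at h_int ⊢
  rw [setIntegral_prod _ h_int]
  refine setIntegral_congr_fun measurableSet_Ioi fun r _ ↦ ?_
  simp only [complexPolarCoord_symm_eq_circleMap]
  rw [integral_smul, setIntegral_Ioo_circleMap_eq_smul_circleAverage, smul_comm]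

lemma integral_abs_mul_circleAverage {g : ℂ → ℝ} (hg : Integrable g) :
    ∫ σ : ℝ, |σ| * circleAverage g 0 σ = π⁻¹ * ∫ w, g w := by
  have h_even := integral_comp_abs (f := fun σ ↦ σ * circleAverage g 0 σ)
  simp only [circleAverage_abs_radius] at h_even
  rw [h_even, integral_eq_smul_integral_Ioi_smul_circleAverage hg]
  simp only [smul_eq_mul]
  field_simp

end PolarCoordinates

section FourierSlice

lemma fourier_ofReal {E : Type*} [NormedAddCommGroup E] [NormedSpace ℂ E] {G : ℂ → E}
    (hG : Integrable G) (ρ : ℝ) :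
    𝓕 G (ρ : ℂ) = 𝓕 (fun s : ℝ ↦ ∫ t : ℝ, G ⟨s, t⟩) ρ := by
  have h_vol := Complex.volume_preserving_equiv_real_prod.symm
  have h_phase : Integrable fun z : ℂ ↦ 𝐞 (-inner ℝ z (ρ : ℂ)) • G z :=
    (fourierIntegral_convergent_iff (ρ : ℂ)).mpr hG
  have h_prod := h_vol.integrable_comp_of_integrable h_phase
  rw [Measure.volume_eq_prod] at h_prod
  rw [Real.fourier_eq, Real.fourier_real_eq,
    ← h_vol.integral_comp Complex.measurableEquivRealProd.symm.measurableEmbedding,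
    Measure.volume_eq_prod]
  refine (integral_prod _ h_prod).trans ?_
  refine integral_congr_ae (.of_forall fun s ↦ ?_)
  simp [Complex.inner, Circle.smul_def, integral_smul, mul_comm ρ]

lemma fourier1D_eq_fourier (h : ℝ → ℂ) (σ : ℝ) :
    fourier1D h σ = (((2 * π : ℝ) ^ ((1 : ℝ) / 2) : ℝ) : ℂ)⁻¹ * 𝓕 h ((2 * π)⁻¹ * σ) := by
  rw [fourier1D, Real.fourier_real_eq_integral_exp_smul]
  congr 2 with s
  rw [smul_eq_mul, mul_comm]
  congr 2
  push_cast
  field_simp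

lemma radonTransform_cos_sin (f : ℝ × ℝ → ℂ) (s θ : ℝ) :
    radonTransform f s (cos θ, sin θ) =
      ∫ t : ℝ, (f ∘ equivRealProd ∘ rotation (Circle.exp θ)) ⟨s, t⟩ := by
  refine integral_congr_ae (.of_forall fun t ↦ ?_)
  simp only [Function.comp_apply, rotation_apply, Circle.coe_exp, Complex.equivRealProd_apply,
    Complex.mul_re, Complex.mul_im, Complex.exp_ofReal_mul_I_re, Complex.exp_ofReal_mul_I_im]
  ring_nf

lemma rotation_circleExp_ofReal (ρ θ : ℝ) :
    rotation (Circle.exp θ) (ρ : ℂ) = circleMap 0 ρ θ := by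
  rw [rotation_apply, Circle.coe_exp, circleMap_zero, mul_comm]

/-- The unitary Fourier transform `f̂(ξ) = (2π)⁻¹ ∫ f(x) e^{-i⟨x,ξ⟩} dx` on `ℝ²`, normalized like
`fourier1D`. Frequencies are complex numbers so that `σv(θ)` is `circleMap 0 σ θ`. -/
noncomputable def fourier2D (f : ℝ × ℝ → ℂ) (ξ : ℂ) : ℂ :=
  ((2 * π : ℝ) : ℂ)⁻¹ * 𝓕 (f ∘ equivRealProd) ((2 * π)⁻¹ • ξ)

theorem fourier1D_radonTransform {f : ℝ × ℝ → ℂ} (hf : Integrable f) (σ θ : ℝ) :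
    fourier1D (fun s ↦ radonTransform f s (cos θ, sin θ)) σ =
      ((2 * π : ℝ) ^ ((1 : ℝ) / 2) : ℝ) * fourier2D f (circleMap 0 σ θ) := by
  have h_rot : Integrable (f ∘ equivRealProd ∘ rotation (Circle.exp θ)) :=
    (rotation (Circle.exp θ)).measurePreserving.integrable_comp_of_integrable
      (Complex.volume_preserving_equiv_real_prod.integrable_comp_of_integrable hf)
  have h_slice : 𝓕 (fun s ↦ radonTransform f s (cos θ, sin θ)) ((2 * π)⁻¹ * σ) =
      𝓕 (f ∘ equivRealProd) ((2 * π)⁻¹ • circleMap 0 σ θ) := by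
    simp only [radonTransform_cos_sin]
    rw [← fourier_ofReal h_rot, ← Function.comp_assoc, Real.fourier_comp_linearIsometry,
      rotation_circleExp_ofReal, circleMap_zero, circleMap_zero, Complex.ofReal_mul,
      Complex.real_smul, mul_assoc]
  have h_sqrt : (((2 * π : ℝ) ^ ((1 : ℝ) / 2) : ℝ) : ℂ) ^ 2 = (2 * π : ℝ) := by
    rw [← Complex.ofReal_pow, ← sqrt_eq_rpow, sq_sqrt two_pi_pos.le]
  have h_ne : (((2 * π : ℝ) ^ ((1 : ℝ) / 2) : ℝ) : ℂ) ≠ 0 :=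
    Complex.ofReal_ne_zero.mpr (by positivity)
  rw [fourier1D_eq_fourier, h_slice, fourier2D, ← h_sqrt]
  field_simp

lemma norm_sq_fourier1D_radonTransform {f : ℝ × ℝ → ℂ} (hf : Integrable f) (σ θ : ℝ) :
    ‖fourier1D (fun s ↦ radonTransform f s (cos θ, sin θ)) σ‖ ^ 2 =
      2 * π * ‖fourier2D f (circleMap 0 σ θ)‖ ^ 2 := by
  rw [fourier1D_radonTransform hf, norm_mul, mul_pow, Complex.norm_real, Real.norm_eq_abs, sq_abs,
    ← sqrt_eq_rpow, sq_sqrt two_pi_pos.le]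

lemma intervalIntegral_norm_sq_fourier1D_radonTransform {f : ℝ × ℝ → ℂ} (hf : Integrable f)
    (σ : ℝ) :
    ∫ θ in (0 : ℝ)..2 * π, ‖fourier1D (fun s ↦ radonTransform f s (cos θ, sin θ)) σ‖ ^ 2 =
      (2 * π) ^ 2 * circleAverage (fun ξ ↦ ‖fourier2D f ξ‖ ^ 2) 0 σ := by
  simp only [norm_sq_fourier1D_radonTransform hf]
  rw [intervalIntegral.integral_const_mul,
    intervalIntegral_circleMap_eq_smul_circleAverage (fun ξ ↦ ‖fourier2D f ξ‖ ^ 2), smul_eq_mul]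
  ring

end FourierSlice

section Schwartz

lemma exists_schwartzMap_eq_fourier2D (f : 𝓢(ℝ × ℝ, ℂ)) :
    ∃ F : 𝓢(ℂ, ℂ), ⇑F = fourier2D f := by
  let G : 𝓢(ℂ, ℂ) := 𝓕 (SchwartzMap.compCLMOfContinuousLinearEquiv ℂ equivRealProdCLM f)
  let scaling : ℂ ≃L[ℝ] ℂ :=
    ContinuousLinearEquiv.smulLeft (Units.mk0 (2 * π)⁻¹ (inv_ne_zero two_pi_pos.ne'))
  exact ⟨((2 * π : ℝ) : ℂ)⁻¹ • SchwartzMap.compCLMOfContinuousLinearEquiv ℂ scaling G, rfl⟩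

lemma integral_norm_sq_fourier2D (f : 𝓢(ℝ × ℝ, ℂ)) :
    ∫ ξ, ‖fourier2D f ξ‖ ^ 2 = ∫ x, ‖f x‖ ^ 2 := by
  have h_scaling := Measure.integral_comp_inv_smul_of_nonneg volume
    (fun ξ ↦ ‖𝓕 (f ∘ equivRealProd) ξ‖ ^ 2) two_pi_pos.le
  calc ∫ ξ, ‖fourier2D f ξ‖ ^ 2
      = ((2 * π)⁻¹) ^ 2 * ∫ ξ : ℂ, ‖𝓕 (f ∘ equivRealProd) ((2 * π)⁻¹ • ξ)‖ ^ 2 := by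
        rw [← integral_const_mul]
        simp only [fourier2D, norm_mul, mul_pow, norm_inv, Complex.norm_real,
          Real.norm_of_nonneg two_pi_pos.le]
    _ = ∫ ξ, ‖𝓕 (f ∘ equivRealProd) ξ‖ ^ 2 := by
        rw [h_scaling, Complex.finrank_real_complex, smul_eq_mul]
        field_simp
    _ = ∫ z, ‖f (equivRealProd z)‖ ^ 2 :=
        (SchwartzMap.compCLMOfContinuousLinearEquiv ℂ equivRealProdCLM f).integral_norm_sq_fourier
    _ = ∫ x, ‖f x‖ ^ 2 :=
        Complex.volume_preserving_equiv_real_prod.integral_comp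
          Complex.measurableEquivRealProd.measurableEmbedding (fun x ↦ ‖f x‖ ^ 2)

variable {E F : Type*} [NormedAddCommGroup E] [NormedAddCommGroup F] [NormedSpace ℝ F]

lemma exists_one_add_norm_sq_rpow_mul_norm_sq_le [InnerProductSpace ℝ E] (H : 𝓢(E, F)) (s : ℝ) :
    ∃ C, ∀ x, (1 + ‖x‖ ^ 2) ^ s * ‖H x‖ ^ 2 ≤ C := by
  have h_growth := Function.hasTemperateGrowth_one_add_norm_sq_rpow E (s / 2)
  obtain ⟨C, -, hC⟩ := (SchwartzMap.smulLeftCLM F (fun x : E ↦ (1 + ‖x‖ ^ 2) ^ (s / 2)) H).decay 0 0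
  refine ⟨C ^ 2, fun x ↦ ?_⟩
  have h_half : ((1 + ‖x‖ ^ 2) ^ (s / 2)) ^ 2 = (1 + ‖x‖ ^ 2) ^ s := by
    rw [← rpow_mul_natCast (by positivity), Nat.cast_ofNat, div_mul_cancel₀ s two_ne_zero]
  specialize hC x
  rw [pow_zero, one_mul, norm_iteratedFDeriv_zero, SchwartzMap.smulLeftCLM_apply_apply h_growth,
    norm_smul, Real.norm_of_nonneg (by positivity)] at hC
  calc (1 + ‖x‖ ^ 2) ^ s * ‖H x‖ ^ 2 = ((1 + ‖x‖ ^ 2) ^ (s / 2) * ‖H x‖) ^ 2 := by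
        rw [mul_pow, h_half]
    _ ≤ C ^ 2 := by gcongr

lemma integrable_one_add_sq_rpow_mul_circleAverage_norm_sq (H : 𝓢(ℂ, F)) (s : ℝ) :
    Integrable fun σ : ℝ ↦ (1 + σ ^ 2) ^ s * circleAverage (fun ξ ↦ ‖H ξ‖ ^ 2) 0 σ := by
  obtain ⟨C, hC⟩ := exists_one_add_norm_sq_rpow_mul_norm_sq_le H (s + 1)
  have h_cont : Continuous fun ξ ↦ ‖H ξ‖ ^ 2 := H.continuous.norm.pow 2
  refine (integrable_inv_one_add_sq.const_mul C).mono' ?_ (.of_forall fun σ ↦ ?_)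
  · exact (((by fun_prop : Continuous fun σ : ℝ ↦ 1 + σ ^ 2).rpow_const
      fun σ ↦ .inl (by positivity)).mul h_cont.circleAverage).aestronglyMeasurable
  have h_avg : circleAverage (fun ξ ↦ ‖H ξ‖ ^ 2) 0 σ ≤ C / (1 + σ ^ 2) ^ (s + 1) := by
    refine circleAverage_mono_on_of_le_circle h_cont.continuousOn.circleIntegrable' fun ξ hξ ↦ ?_
    have h_norm : ‖ξ‖ ^ 2 = σ ^ 2 := by rw [mem_sphere_zero_iff_norm.mp hξ, sq_abs]
    rw [le_div_iff₀' (by positivity), ← h_norm]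
    exact hC ξ
  have h_nonneg : 0 ≤ circleAverage (fun ξ ↦ ‖H ξ‖ ^ 2) 0 σ :=
    circleAverage_nonneg_of_nonneg fun ξ _ ↦ by positivity
  rw [Real.norm_of_nonneg (by positivity)]
  calc (1 + σ ^ 2) ^ s * circleAverage (fun ξ ↦ ‖H ξ‖ ^ 2) 0 σ
      ≤ (1 + σ ^ 2) ^ s * (C / (1 + σ ^ 2) ^ (s + 1)) := by gcongr
    _ = C * (1 + σ ^ 2)⁻¹ := by
        rw [rpow_add_one (by positivity)]
        field_simp

end Schwartz

theorem integral_norm_sq_eq_integral_norm_sq_fourier1D_radonTransform (f : 𝓢(ℝ × ℝ, ℂ)) :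
    (∫ x : ℝ × ℝ, ‖f x‖ ^ 2) =
      (4 * π)⁻¹ *
        ∫ σ : ℝ, (∫ θ in (0 : ℝ)..2 * π,
          ‖fourier1D (fun s ↦ radonTransform f s (cos θ, sin θ)) σ‖ ^ 2) * |σ| := by
  obtain ⟨F, hF⟩ := exists_schwartzMap_eq_fourier2D f
  have h_int : Integrable fun ξ ↦ ‖fourier2D f ξ‖ ^ 2 := by
    rw [← hF]
    exact (F.memLp 2).integrable_norm_pow two_ne_zero
  simp only [intervalIntegral_norm_sq_fourier1D_radonTransform f.integrable, mul_assoc,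
    mul_comm (circleAverage _ _ _)]
  rw [integral_const_mul, integral_abs_mul_circleAverage h_int, integral_norm_sq_fourier2D]
  field_simp
  norm_num

theorem integral_norm_sq_fourier1D_radonTransform_mul_abs_le (f : 𝓢(ℝ × ℝ, ℂ)) :
    ∫ σ : ℝ, (∫ θ in (0 : ℝ)..2 * π,
        ‖fourier1D (fun s ↦ radonTransform f s (cos θ, sin θ)) σ‖ ^ 2) * |σ| ≤
      ∫ σ : ℝ, ∫ θ in (0 : ℝ)..2 * π, (1 + σ ^ 2) ^ ((1 : ℝ) / 2) *
        ‖fourier1D (fun s ↦ radonTransform f s (cos θ, sin θ)) σ‖ ^ 2 := by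
  obtain ⟨F, hF⟩ := exists_schwartzMap_eq_fourier2D f
  have h_avg_nonneg (σ : ℝ) : 0 ≤ circleAverage (fun ξ ↦ ‖fourier2D f ξ‖ ^ 2) 0 σ :=
    circleAverage_nonneg_of_nonneg fun ξ _ ↦ by positivity
  have h_weight (σ : ℝ) : |σ| ≤ (1 + σ ^ 2) ^ ((1 : ℝ) / 2) := by
    rw [← sqrt_eq_rpow]
    exact abs_le_sqrt (by linarith)
  -- Decay of `f̂` is essential here: a divergent integral on the right would read as `0`.
  have h_int := integrable_one_add_sq_rpow_mul_circleAverage_norm_sq F (1 / 2)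
  rw [hF] at h_int
  simp only [intervalIntegral.integral_const_mul,
    intervalIntegral_norm_sq_fourier1D_radonTransform f.integrable,
    mul_left_comm _ ((2 * π) ^ 2), mul_assoc ((2 * π) ^ 2)]
  refine integral_mono_of_nonneg (.of_forall fun σ ↦ ?_) (h_int.const_mul _)
    (.of_forall fun σ ↦ ?_)
  · exact mul_nonneg (by positivity) (mul_nonneg (h_avg_nonneg σ) (abs_nonneg σ))
  · simp only [mul_comm _ |σ|]
    gcongr
    exacts [h_avg_nonneg σ, h_weight σ]

theorem radon_sharp_stability_general (f : 𝓢(ℝ × ℝ, ℂ)) :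
    (∫ x : ℝ × ℝ, ‖f x‖ ^ 2) =
      (4 * π)⁻¹ *
        ∫ σ : ℝ, (∫ θ in (0 : ℝ)..2 * π,
          ‖fourier1D (fun s ↦ radonTransform f s (cos θ, sin θ)) σ‖ ^ 2) * |σ| ∧
    √(∫ x : ℝ × ℝ, ‖f x‖ ^ 2) ≤
      (4 * π) ^ (-(1 : ℝ) / 2) *
        √(∫ σ : ℝ, ∫ θ in (0 : ℝ)..2 * π,
          (1 + σ ^ 2) ^ ((1 : ℝ) / 2) *
            ‖fourier1D (fun s ↦ radonTransform f s (cos θ, sin θ)) σ‖ ^ 2) := by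
  have h_const : √(4 * π)⁻¹ = (4 * π) ^ (-(1 : ℝ) / 2) := by
    rw [sqrt_eq_rpow, inv_rpow (by positivity), ← rpow_neg (by positivity), neg_div]
  have h_plancherel := integral_norm_sq_eq_integral_norm_sq_fourier1D_radonTransform f
  refine ⟨h_plancherel, ?_⟩
  rw [h_plancherel, sqrt_mul (by positivity), h_const]
  exact mul_le_mul_of_nonneg_left
    (sqrt_le_sqrt (integral_norm_sq_fourier1D_radonTransform_mul_abs_le f)) (by positivity)

/-- for `f ∈ C_c^∞(ℝ²)` one has the Plancherel-type identity
`‖f‖²_{L²(ℝ²)} = (4π)⁻¹ ∫_ℝ ∫_{S¹} |(Rf)~(σ,v)|² |σ| dv dσ` (the circle `S¹`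
being parametrized by `v(θ) = (cos θ, sin θ)`, `θ ∈ [0,2π]`), and hence the
stability estimate `‖f‖_{L²} ≤ (4π)^{-1/2} ‖Rf‖_{H^{1/2}_T(ℝ×S¹)}` with
`‖h‖²_{H^{1/2}_T} = ∫∫ (1+σ²)^{1/2} |h̃(σ,v)|² dv dσ`. -/
theorem radon_sharp_stability (f : ℝ × ℝ → ℂ)
    (hf : ContDiff ℝ (⊤ : ℕ∞) f) (hsupp : HasCompactSupport f) :
    (∫ x : ℝ × ℝ, ‖f x‖ ^ 2) =
      (4 * π)⁻¹ *
        ∫ σ : ℝ, (∫ θ in (0:ℝ)..(2 * π),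
          ‖fourier1D (fun s => radonTransform f s (Real.cos θ, Real.sin θ)) σ‖ ^ 2) * |σ| ∧
    Real.sqrt (∫ x : ℝ × ℝ, ‖f x‖ ^ 2) ≤
      (4 * π) ^ (-(1 : ℝ) / 2) *
        Real.sqrt (∫ σ : ℝ, ∫ θ in (0:ℝ)..(2 * π),
          (1 + σ ^ 2) ^ ((1 : ℝ) / 2) *
            ‖fourier1D (fun s => radonTransform f s (Real.cos θ, Real.sin θ)) σ‖ ^ 2) :=
  radon_sharp_stability_general (hsupp.toSchwartzMap hf)
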